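/- Let Ω ⊆ ℝ^d be a bounded open set, 0 ≤ θ ≤ 1, and let A : Ω → Sym_d(ℝ), b : Ω → ℝ^d, c : Ω → [0,∞) be measurable and essentially bounded, satisfying a.e. the general Cordes condition with parameters λ > 0 and ε ∈ (0,1), with tr A + c/λ > 0 a.e.; let Γ be an essential upper bound for γ := (tr A + c/λ)/(‖A‖_F² + ‖b‖²/(2λ) + (c/λ)²) on Ω. Suppose C_P > 0 is such that ∫_Ω ‖∇φ‖² ≥ C_P·(∫_Ω φ² + ∫_Ω ‖∇φ‖²) and ∫_Ω ‖Dψ‖_F² ≥ C_P·(∫_Ω ‖ψ‖² + ∫_Ω ‖Dψ‖_F²) for all smooth φ : ℝ^d → ℝ and ψ : ℝ^d → ℝ^d with compact support in Ω. Then for all such φ, ψ, ∫_Ω ‖∇φ − ψ‖² + (1/2)∫_Ω ‖Dψ − Dψᵀ‖_F² + ∫_Ω (L_θ(φ, ψ, Dψ))² ≥ C·(‖φ‖²_{H¹} + ‖ψ‖²_{H¹}), where, with κ := (1−ε)^{1/4} − (1−ε)^{1/2}, C = κ²·min(C_P, 4λ²) / max( 2κ²C_P + 2λ(θ² + (1−θ)²)/(1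 − √(1−ε)), max(1, Γ²) ). -/

import Mathlib

/-!
Write `s = √(1-ε)`, `w = θψ + (1-θ)∇φ`, `e = ∇φ - ψ`, `q = θ² + (1-θ)²`,
`γ = (tr A + c/λ)/(‖A‖² + ‖b‖²/(2λ) + (c/λ)²)`.

* Pointwise (`cordes_pointwise`): the Cordes condition says that the weighted norm of
  `(γA - I, γb, γc/λ - 1)` is at most `s`, so Cauchy–Schwarz gives
  `(γL_θ - (div ψ - λφ))² ≤ s² (‖Dψ‖² + 2λ‖w‖² + λ²φ²)`. By Young's inequality with weight `s`,
  `max(1, Γ²) L_θ² ≥ (1-s) ((div ψ - λφ)² - s (‖Dψ‖² + 2λ‖w‖² + λ²φ²))`.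
* Integration by parts (`integral_div_sq`, `integral_mul_div`) gives
  `∫ (div ψ - λφ)² = ∫ ‖Dψ‖² - ½ ∫ ‖Dψ - Dψᵀ‖² + 2λ ∫ ∇φ·ψ + λ² ∫ φ²`.
* Pointwise (`dot_lower`): `2s‖w‖² ≤ 2∇φ·ψ + q/(1-s) ‖e‖²`.

Together these bound `(1-s)² (∫ ‖Dψ‖² + λ² ∫ φ²)` by the weighted left-hand side, and `1 - s ≥ 2κ`.
Finally `‖∇φ‖² ≤ 2‖e‖² + 2‖ψ‖²` and the Poincaré inequality for `ψ` bound
`min(C_P, 4λ²) (‖φ‖²_{H¹} + ‖ψ‖²_{H¹})` by `4 (∫ ‖Dψ‖² + λ² ∫ φ²) + 2 C_P ∫ ‖e‖²`; this is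
the elementary lemma `final_algebra`.
-/


open MeasureTheory Matrix Finset Bornology

noncomputable section

/-- Frobenius inner product of two real `d × d` matrices. -/
def frobInner {d : ℕ} (M N : Matrix (Fin d) (Fin d) ℝ) : ℝ :=
  ∑ i, ∑ j, M i j * N i j

/-- Squared Frobenius norm of a real `d × d` matrix. -/
def frobSq {d : ℕ} (M : Matrix (Fin d) (Fin d) ℝ) : ℝ := frobInner M M

/-- Squared Euclidean norm of a vector in `ℝ^d`. -/
def vecSq {d : ℕ} (v : Fin d → ℝ) : ℝ := ∑ i, v i ^ 2

/-- Jacobian matrix of a vector field `ψ : ℝ^d → ℝ^d`, `(jac ψ x) i j = ∂_j ψ_i (x)`. -/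
def jac {d : ℕ} (ψ : (Fin d → ℝ) → (Fin d → ℝ)) (x : Fin d → ℝ) :
    Matrix (Fin d) (Fin d) ℝ :=
  Matrix.of fun i j => fderiv ℝ ψ x (Pi.single j 1) i

/-- Gradient of a scalar field `φ : ℝ^d → ℝ`. -/
def grad' {d : ℕ} (φ : (Fin d → ℝ) → ℝ) (x : Fin d → ℝ) : Fin d → ℝ :=
  fun i => fderiv ℝ φ x (Pi.single i 1)

/-- Divergence of a vector field `ψ : ℝ^d → ℝ^d`. -/
def divg {d : ℕ} (ψ : (Fin d → ℝ) → (Fin d → ℝ)) (x : Fin d → ℝ) : ℝ :=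
  ∑ i, jac ψ x i i

/-- Hessian matrix of a scalar field `u : ℝ^d → ℝ`. -/
def hess {d : ℕ} (u : (Fin d → ℝ) → ℝ) (x : Fin d → ℝ) : Matrix (Fin d) (Fin d) ℝ :=
  jac (grad' u) x

/-- The operator `L_θ(φ, ψ, Ξ) := A : Ξ + b·(θψ + (1−θ)∇φ) − cφ` evaluated at `x`. -/
def Ltheta {d : ℕ} (A : (Fin d → ℝ) → Matrix (Fin d) (Fin d) ℝ)
    (b : (Fin d → ℝ) → Fin d → ℝ) (c : (Fin d → ℝ) → ℝ) (θ : ℝ)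
    (φ : (Fin d → ℝ) → ℝ) (ψ : (Fin d → ℝ) → (Fin d → ℝ))
    (Ξ : (Fin d → ℝ) → Matrix (Fin d) (Fin d) ℝ) (x : Fin d → ℝ) : ℝ :=
  frobInner (A x) (Ξ x)
    + (∑ i, b x i * (θ * ψ x i + (1 - θ) * grad' φ x i)) - c x * φ x

/-! ### Pointwise inequalities -/

lemma frobSq_nonneg {d : ℕ} (M : Matrix (Fin d) (Fin d) ℝ) : 0 ≤ frobSq M := by
  unfold frobSq frobInner
  exact Finset.sum_nonneg fun _ _ => Finset.sum_nonneg fun _ _ => mul_self_nonneg _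

lemma vecSq_nonneg {d : ℕ} (v : Fin d → ℝ) : 0 ≤ vecSq v :=
  Finset.sum_nonneg fun _ _ => sq_nonneg _

lemma entry_sq_le_frobSq {d : ℕ} (M : Matrix (Fin d) (Fin d) ℝ) (i j : Fin d) :
    M i j ^ 2 ≤ frobSq M := by
  have h1 : M i j * M i j ≤ ∑ k, M i k * M i k :=
    Finset.single_le_sum (f := fun k => M i k * M i k) (fun _ _ => mul_self_nonneg _)
      (Finset.mem_univ j)
  have h2 : (∑ k, M i k * M i k) ≤ ∑ l, ∑ k, M l k * M l k :=
    Finset.single_le_sum (f := fun l => ∑ k, M l k * M l k)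
      (fun _ _ => Finset.sum_nonneg fun _ _ => mul_self_nonneg _) (Finset.mem_univ i)
  have : frobSq M = ∑ l, ∑ k, M l k * M l k := rfl
  rw [this]
  nlinarith

lemma entry_sq_le_vecSq {d : ℕ} (v : Fin d → ℝ) (i : Fin d) : v i ^ 2 ≤ vecSq v :=
  Finset.single_le_sum (f := fun k => v k ^ 2) (fun _ _ => sq_nonneg _) (Finset.mem_univ i)

lemma frobInner_sq_le {d : ℕ} (M N : Matrix (Fin d) (Fin d) ℝ) :
    frobInner M N ^ 2 ≤ frobSq M * frobSq N := by
  have := Finset.sum_mul_sq_le_sq_mul_sq (Finset.univ ×ˢ Finset.univ : Finset (Fin d × Fin d))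
    (fun p => M p.1 p.2) (fun p => N p.1 p.2)
  simpa only [Finset.sum_product, frobSq, frobInner, sq (M _ _), sq (N _ _)] using this

lemma vec_inner_sq_le {d : ℕ} (v w : Fin d → ℝ) :
    (∑ i, v i * w i) ^ 2 ≤ vecSq v * vecSq w :=
  Finset.sum_mul_sq_le_sq_mul_sq _ _ _

/-- Cauchy–Schwarz on a direct sum, from Cauchy–Schwarz on both summands. -/
lemma cs_add {p q a b x y : ℝ} (ha : 0 ≤ a) (hb : 0 ≤ b) (hx : 0 ≤ x) (hy : 0 ≤ y)
    (hp : p ^ 2 ≤ a * x) (hq : q ^ 2 ≤ b * y) : (p + q) ^ 2 ≤ (a + b) * (x + y) := by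
  have h1 : (2 * (p * q)) ^ 2 ≤ (a * y + b * x) ^ 2 := by
    have : p ^ 2 * q ^ 2 ≤ (a * x) * (b * y) :=
      mul_le_mul hp hq (sq_nonneg _) (mul_nonneg ha hx)
    nlinarith [sq_nonneg (a * y - b * x)]
  have h2 : 2 * (p * q) ≤ a * y + b * x :=
    (abs_le_of_sq_le_sq' h1 (by positivity)).2
  nlinarith

lemma frobSq_smul_sub_one {d : ℕ} (M : Matrix (Fin d) (Fin d) ℝ) (g : ℝ) :
    frobSq (g • M - 1) = g ^ 2 * frobSq M - 2 * g * M.trace + d := by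
  have h : ∀ i, ∑ j, (g • M - 1) i j * (g • M - 1) i j
      = g ^ 2 * (∑ j, M i j * M i j) - 2 * g * M i i + 1 := by
    intro i
    have : ∀ j, (g • M - 1) i j * (g • M - 1) i j
        = g ^ 2 * (M i j * M i j) + (if i = j then - 2 * g * M i j + 1 else 0) := by
      intro j
      by_cases hij : i = j
      · subst hij; simp [Matrix.sub_apply]; ring
      · simp [Matrix.sub_apply, hij]; ring
    simp only [this, Finset.sum_add_distrib, Finset.sum_ite_eq, Finset.mem_univ, if_true,
      ← Finset.mul_sum]
    ring
  simp only [frobSq, frobInner, h, Matrix.trace, Matrix.diag, Finset.sum_add_distrib,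
    Finset.sum_sub_distrib, ← Finset.mul_sum, Finset.sum_const, Finset.card_univ,
    Fintype.card_fin, nsmul_eq_mul, mul_one]

lemma frobInner_smul_sub_one {d : ℕ} (M N : Matrix (Fin d) (Fin d) ℝ) (g : ℝ) :
    frobInner (g • M - 1) N = g * frobInner M N - ∑ i, N i i := by
  have h : ∀ i, ∑ j, (g • M - 1) i j * N i j = g * (∑ j, M i j * N i j) - N i i := by
    intro i
    simp [Matrix.sub_apply, sub_mul, Finset.sum_sub_distrib, Finset.mul_sum, Matrix.one_apply,
      mul_assoc]
  simp only [frobInner, h, Finset.sum_sub_distrib, ← Finset.mul_sum]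

/-- Young's inequality with weight `s`: if `G` is within `s √X` of `h`, then
`G² ≥ (1-s)(h² - sX)`. -/
lemma young_weight {s G h X : ℝ} (hs0 : 0 < s) (hs1 : s ≤ 1) (hkey : (G - h) ^ 2 ≤ s ^ 2 * X) :
    (1 - s) * (h ^ 2 - s * X) ≤ G ^ 2 := by
  refine le_of_mul_le_mul_left ?_ hs0
  have h1 := mul_le_mul_of_nonneg_left hkey (sub_nonneg.2 hs1)
  have h2 : s * G ^ 2 + (1 - s) * (G - h) ^ 2 - s * (1 - s) * h ^ 2 = (G - (1 - s) * h) ^ 2 := by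
    ring
  linarith [sq_nonneg (G - (1 - s) * h)]

/-- The pointwise consequence of the Cordes condition: `s` stands for `√(1-ε)`, `D` for `Dψ`,
`w` for `θψ + (1-θ)∇φ` and `f` for the value of `φ`. -/
lemma cordes_pointwise {d : ℕ} (M D : Matrix (Fin d) (Fin d) ℝ) (b w : Fin d → ℝ)
    (c f lam ε s Γ : ℝ) (hlam : 0 < lam) (hε : 0 < ε) (hs0 : 0 < s) (hs1 : s < 1)
    (hs : s ^ 2 = 1 - ε) (hT : 0 < M.trace + c / lam)
    (hC : (frobSq M + vecSq b / (2 * lam) + (c / lam) ^ 2) / (M.trace + c / lam) ^ 2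
      ≤ 1 / ((d : ℝ) + ε))
    (hΓ : (M.trace + c / lam) / (frobSq M + vecSq b / (2 * lam) + (c / lam) ^ 2) ≤ Γ) :
    (1 - s) * (((∑ i, D i i) - lam * f) ^ 2
        - s * (frobSq D + 2 * lam * vecSq w + lam ^ 2 * f ^ 2))
      ≤ max 1 (Γ ^ 2) * (frobInner M D + (∑ i, b i * w i) - c * f) ^ 2 := by
  set T := M.trace + c / lam with hTdef
  set N := frobSq M + vecSq b / (2 * lam) + (c / lam) ^ 2 with hNdef
  have hM := frobSq_nonneg M
  have hb : 0 ≤ vecSq b / (2 * lam) := div_nonneg (vecSq_nonneg b) (by positivity)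
  have hc2 := sq_nonneg (c / lam)
  have hN : 0 < N := by
    rcases (show 0 ≤ N by positivity).eq_or_lt with h0 | h0
    · exfalso
      have e1 : frobSq M = 0 := by linarith
      have e2 : c / lam = 0 := by
        have : (c / lam) ^ 2 = 0 := by linarith
        exact pow_eq_zero_iff (two_ne_zero) |>.1 this
      have e3 : M.trace = 0 := by
        refine Finset.sum_eq_zero fun i _ => ?_
        have := entry_sq_le_frobSq M i i
        have h3 : M i i ^ 2 = 0 := le_antisymm (by linarith) (sq_nonneg _)
        simpa using h3
      rw [hTdef, e2, e3] at hT
      simp at hT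
    · exact h0
  set g := T / N with hg
  have hg0 : 0 < g := div_pos hT hN
  have hgN : g * N = T := div_mul_cancel₀ _ hN.ne'
  have hdε : 0 < (d : ℝ) + ε := by positivity
  have hgT : (d : ℝ) + ε ≤ g * T := by
    rw [div_le_div_iff₀ (by positivity) hdε, one_mul] at hC
    rw [hg, div_mul_eq_mul_div, le_div_iff₀ hN]
    nlinarith
  have hX0 : 0 ≤ frobSq D + 2 * lam * vecSq w + lam ^ 2 * f ^ 2 := by
    have := frobSq_nonneg D
    have := vecSq_nonneg w
    positivity
  have hD := frobSq_nonneg D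
  have hw := vecSq_nonneg w
  -- `γL - (div ψ - λφ)` is the pairing of `(γA - I, γb, γc/λ - 1)` with `(Dψ, w, -λφ)`.
  have hkey : (g * (frobInner M D + (∑ i, b i * w i) - c * f) - ((∑ i, D i i) - lam * f)) ^ 2
      ≤ s ^ 2 * (frobSq D + 2 * lam * vecSq w + lam ^ 2 * f ^ 2) := by
    have h1 := frobInner_sq_le (g • M - 1) D
    have h2 : (g * ∑ i, b i * w i) ^ 2
        ≤ (g ^ 2 * (vecSq b / (2 * lam))) * (2 * lam * vecSq w) := by
      have e : (g ^ 2 * (vecSq b / (2 * lam))) * (2 * lam * vecSq w)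
        = g ^ 2 * (vecSq b * vecSq w) := by field_simp
      rw [e, mul_pow]
      exact mul_le_mul_of_nonneg_left (vec_inner_sq_le b w) (sq_nonneg _)
    have h3 : (-(g * (c / lam) - 1) * (lam * f)) ^ 2
        ≤ (g * (c / lam) - 1) ^ 2 * (lam ^ 2 * f ^ 2) := le_of_eq (by ring)
    have h12 := cs_add (frobSq_nonneg _) (by positivity) hD (by positivity) h1 h2
    have h123 := cs_add (add_nonneg (frobSq_nonneg _) (by positivity)) (sq_nonneg _)
      (by positivity) (by positivity) h12 h3
    have e : frobInner (g • M - 1) D + g * (∑ i, b i * w i) + -(g * (c / lam) - 1) * (lam * f)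
        = g * (frobInner M D + (∑ i, b i * w i) - c * f) - ((∑ i, D i i) - lam * f) := by
      rw [frobInner_smul_sub_one]; field_simp; ring
    rw [e] at h123
    refine h123.trans (mul_le_mul_of_nonneg_right ?_ hX0)
    rw [frobSq_smul_sub_one, hs]
    have : g ^ 2 * N = g * T := by rw [← hgN]; ring
    rw [hNdef] at this
    rw [hTdef] at this hgT
    nlinarith
  have hgΓ : g ^ 2 ≤ max 1 (Γ ^ 2) :=
    (pow_le_pow_left₀ hg0.le hΓ 2).trans (le_max_right _ _)
  have hfin : g ^ 2 * (frobInner M D + (∑ i, b i * w i) - c * f) ^ 2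
      ≤ max 1 (Γ ^ 2) * (frobInner M D + (∑ i, b i * w i) - c * f) ^ 2 :=
    mul_le_mul_of_nonneg_right hgΓ (sq_nonneg _)
  refine le_trans ?_ hfin
  exact (young_weight hs0 hs1.le hkey).trans_eq (mul_pow _ _ _)

/-- With `u = ∇φ`, `v = ψ`: comparison of `‖θψ + (1-θ)∇φ‖²` with `∇φ·ψ`, up to `‖∇φ - ψ‖²`. -/
lemma dot_lower {d : ℕ} (u v : Fin d → ℝ) {θ s : ℝ} (hθ0 : 0 ≤ θ) (hθ1 : θ ≤ 1)
    (hs0 : 0 < s) :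
    (1 - s) * (2 * s * vecSq (fun i => θ * v i + (1 - θ) * u i))
      ≤ (1 - s) * (2 * ∑ i, u i * v i)
        + (θ ^ 2 + (1 - θ) ^ 2) * vecSq (fun i => u i - v i) := by
  simp only [vecSq, Finset.mul_sum, ← Finset.sum_add_distrib]
  refine Finset.sum_le_sum fun i _ => ?_
  obtain ⟨w, hw⟩ : ∃ w, w = θ * v i + (1 - θ) * u i := ⟨_, rfl⟩
  obtain ⟨e, he⟩ : ∃ e, e = u i - v i := ⟨_, rfl⟩
  have hu : u i = w + θ * e := by rw [hw, he]; ring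
  have hv : v i = w - (1 - θ) * e := by rw [hw, he]; ring
  rw [← hw, ← he, hu, hv]
  have hθθ : 0 ≤ θ * (1 - θ) := mul_nonneg hθ0 (by linarith)
  have h1 : 0 ≤ s * (θ * (1 - θ) * e ^ 2) := by positivity
  -- Completing the square in `w` leaves a nonnegative multiple of `e²`.
  nlinarith [sq_nonneg (2 * (1 - s) * w + (2 * θ - 1) * e),
    mul_nonneg (sq_nonneg (2 * θ - 1)) (sq_nonneg e)]

/-! ### Integration by parts -/

lemma integrable_restrict_of_continuous {d : ℕ} {Ω : Set (Fin d → ℝ)} (hb : IsBounded Ω)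
    {f : (Fin d → ℝ) → ℝ} (hf : Continuous f) : Integrable f (volume.restrict Ω) :=
  (hf.continuousOn.integrableOn_compact hb.isCompact_closure).mono_set subset_closure

lemma ibp {d : ℕ} {u v : (Fin d → ℝ) → ℝ} (hu : ContDiff ℝ 1 u) (hv : ContDiff ℝ 1 v)
    (hus : HasCompactSupport u) (e : Fin d → ℝ) :
    ∫ x, u x * fderiv ℝ v x e = - ∫ x, fderiv ℝ u x e * v x := by
  have hu' := (hu.continuous_fderiv one_ne_zero).clm_apply (continuous_const (y := e))
  have hv' := (hv.continuous_fderiv one_ne_zero).clm_apply (continuous_const (y := e))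
  refine integral_mul_fderiv_eq_neg_fderiv_mul_of_integrable ?_ ?_ ?_
    (fun x _ => (hu.differentiable one_ne_zero) x) (fun x _ => (hv.differentiable one_ne_zero) x)
  · exact (hu'.mul hv.continuous).integrable_of_hasCompactSupport (hus.fderiv_apply ℝ e).mul_right
  · exact (hu.continuous.mul hv').integrable_of_hasCompactSupport hus.mul_right
  · exact (hu.continuous.mul hv.continuous).integrable_of_hasCompactSupport hus.mul_right

/-- Two integrations by parts and the symmetry of second derivatives exchange the directions. -/
lemma ibp_swap {d : ℕ} {u v : (Fin d → ℝ) → ℝ} (hu : ContDiff ℝ 1 u) (hv : ContDiff ℝ 2 v)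
    (hus : HasCompactSupport u) (a b : Fin d → ℝ) :
    ∫ x, fderiv ℝ u x a * fderiv ℝ v x b = ∫ x, fderiv ℝ u x b * fderiv ℝ v x a := by
  have hfd : ContDiff ℝ 1 (fderiv ℝ v) := hv.fderiv_right (by norm_num)
  have hc : ∀ e : Fin d → ℝ, ContDiff ℝ 1 (fun x => fderiv ℝ v x e) :=
    fun e => hfd.clm_apply contDiff_const
  have hd : ∀ e e' x, fderiv ℝ (fun x => fderiv ℝ v x e) x e'
      = fderiv ℝ (fderiv ℝ v) x e' e := by
    intro e e' x
    rw [fderiv_clm_apply ((hfd.differentiable one_ne_zero) x) (differentiableAt_const e)]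
    simp
  have h1 := ibp hu (hc b) hus a
  have h2 := ibp hu (hc a) hus b
  have h3 : (∫ x, u x * fderiv ℝ (fun x => fderiv ℝ v x b) x a)
      = ∫ x, u x * fderiv ℝ (fun x => fderiv ℝ v x a) x b := by
    congr 1
    ext x
    rw [hd, hd, (hv.contDiffAt.isSymmSndFDerivAt (by simp)) a b]
  linarith

lemma jac_apply {d : ℕ} {ψ : (Fin d → ℝ) → (Fin d → ℝ)} (hψ : ContDiff ℝ (⊤ : ℕ∞) ψ)
    (x : Fin d → ℝ) (i j : Fin d) :
    jac ψ x i j = fderiv ℝ (fun y => ψ y i) x (Pi.single j 1) := by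
  rw [fderiv_apply ((hψ.differentiable (by simp)) x) i]
  rfl

lemma continuous_jac {d : ℕ} {ψ : (Fin d → ℝ) → (Fin d → ℝ)} (hψ : ContDiff ℝ (⊤ : ℕ∞) ψ)
    (i j : Fin d) : Continuous fun x => jac ψ x i j :=
  (continuous_apply i).comp ((hψ.continuous_fderiv (by simp)).clm_apply continuous_const)

lemma continuous_grad {d : ℕ} {φ : (Fin d → ℝ) → ℝ} (hφ : ContDiff ℝ (⊤ : ℕ∞) φ)
    (i : Fin d) : Continuous fun x => grad' φ x i :=
  (hφ.continuous_fderiv (by simp)).clm_apply continuous_const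

lemma jac_eq_zero {d : ℕ} {ψ : (Fin d → ℝ) → (Fin d → ℝ)} {x : Fin d → ℝ}
    (hx : x ∉ tsupport ψ) (i j : Fin d) : jac ψ x i j = 0 := by
  have : fderiv ℝ ψ x = 0 := by
    by_contra h
    exact hx (support_fderiv_subset ℝ h)
  simp [jac, this]

/-- `∫ (div ψ)² = ∫ ‖Dψ‖² - ½ ∫ ‖Dψ - Dψᵀ‖²` for compactly supported `ψ`. -/
lemma integral_div_sq {d : ℕ} {Ω : Set (Fin d → ℝ)} (hb : IsBounded Ω)
    {ψ : (Fin d → ℝ) → (Fin d → ℝ)} (hψ : ContDiff ℝ (⊤ : ℕ∞) ψ)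
    (hψs : HasCompactSupport ψ) (hsub : tsupport ψ ⊆ Ω) :
    ∫ x in Ω, (∑ i, jac ψ x i i) ^ 2
      = (∫ x in Ω, frobSq (jac ψ x))
        - (1 / 2 : ℝ) * ∫ x in Ω, frobSq (jac ψ x - (jac ψ x)ᵀ) := by
  have hJ := continuous_jac hψ
  have hi : ∀ i j k l, Integrable (fun x => jac ψ x i j * jac ψ x k l) (volume.restrict Ω) :=
    fun i j k l => integrable_restrict_of_continuous hb ((hJ i j).mul (hJ k l))
  have hcomp : ∀ i, ContDiff ℝ (⊤ : ℕ∞) (fun y => ψ y i) := fun i => contDiff_pi.1 hψ i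
  have hcs : ∀ i, HasCompactSupport (fun y => ψ y i) :=
    fun i => hψs.comp_left (g := fun v : Fin d → ℝ => v i) rfl
  have hfull : ∀ i j k l, ∫ x in Ω, jac ψ x i j * jac ψ x k l
      = ∫ x, jac ψ x i j * jac ψ x k l := fun i j k l =>
    setIntegral_eq_integral_of_forall_compl_eq_zero fun x hx => by
      rw [jac_eq_zero (fun h => hx (hsub h)), zero_mul]
  have hswap : ∀ i j, ∫ x in Ω, jac ψ x i i * jac ψ x j j
      = ∫ x in Ω, jac ψ x i j * jac ψ x j i := by
    intro i j
    rw [hfull, hfull]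
    simp only [jac_apply hψ]
    exact ibp_swap ((hcomp i).of_le (by simp)) (contDiff_infty.1 (hcomp j) 2) (hcs i) _ _
  have e1 : ∫ x in Ω, (∑ i, jac ψ x i i) ^ 2
      = ∫ x in Ω, ∑ i, ∑ j, jac ψ x i j * jac ψ x j i := by
    simp only [sq, Finset.sum_mul_sum]
    rw [integral_finsetSum _ fun i _ => integrable_finsetSum _ fun j _ => hi _ _ _ _,
      integral_finsetSum _ fun i _ => integrable_finsetSum _ fun j _ => hi _ _ _ _]
    refine Finset.sum_congr rfl fun i _ => ?_
    rw [integral_finsetSum _ fun j _ => hi _ _ _ _, integral_finsetSum _ fun j _ => hi _ _ _ _]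
    exact Finset.sum_congr rfl fun j _ => hswap i j
  have e2 : ∀ x, frobSq (jac ψ x - (jac ψ x)ᵀ)
      = 2 * frobSq (jac ψ x) - 2 * ∑ i, ∑ j, jac ψ x i j * jac ψ x j i := by
    intro x
    have h : ∑ i, ∑ j, jac ψ x j i * jac ψ x j i = ∑ i, ∑ j, jac ψ x i j * jac ψ x i j :=
      Finset.sum_comm
    have h2 : frobSq (jac ψ x - (jac ψ x)ᵀ)
        = (∑ i, ∑ j, jac ψ x i j * jac ψ x i j) + (∑ i, ∑ j, jac ψ x j i * jac ψ x j i)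
          - 2 * ∑ i, ∑ j, jac ψ x i j * jac ψ x j i := by
      simp only [frobSq, frobInner, Matrix.sub_apply, Matrix.transpose_apply, Finset.mul_sum,
        ← Finset.sum_add_distrib, ← Finset.sum_sub_distrib]
      exact Finset.sum_congr rfl fun i _ => Finset.sum_congr rfl fun j _ => by ring
    rw [h2, h]
    simp only [frobSq, frobInner]
    ring
  have i1 : Integrable (fun x => frobSq (jac ψ x)) (volume.restrict Ω) := by
    unfold frobSq frobInner
    exact integrable_finsetSum _ fun i _ => integrable_finsetSum _ fun j _ => hi _ _ _ _
  have i2 : Integrable (fun x => ∑ i, ∑ j, jac ψ x i j * jac ψ x j i) (volume.restrict Ω) :=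
    integrable_finsetSum _ fun i _ => integrable_finsetSum _ fun j _ => hi _ _ _ _
  rw [e1]
  simp only [e2]
  rw [integral_sub (i1.const_mul 2) (i2.const_mul 2), integral_const_mul, integral_const_mul]
  ring

lemma integral_mul_div {d : ℕ} {Ω : Set (Fin d → ℝ)} (hb : IsBounded Ω)
    {φ : (Fin d → ℝ) → ℝ} (hφ : ContDiff ℝ (⊤ : ℕ∞) φ)
    (hφs : HasCompactSupport φ) (hφsub : tsupport φ ⊆ Ω)
    {ψ : (Fin d → ℝ) → (Fin d → ℝ)} (hψ : ContDiff ℝ (⊤ : ℕ∞) ψ) (hsub : tsupport ψ ⊆ Ω) :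
    ∫ x in Ω, φ x * ∑ i, jac ψ x i i = - ∫ x in Ω, ∑ i, grad' φ x i * ψ x i := by
  have hψc : ∀ i, Continuous fun x => ψ x i := fun i => (continuous_apply i).comp hψ.continuous
  have i1 : ∀ i, Integrable (fun x => φ x * jac ψ x i i) (volume.restrict Ω) := fun i =>
    integrable_restrict_of_continuous hb (hφ.continuous.mul (continuous_jac hψ i i))
  have i2 : ∀ i, Integrable (fun x => grad' φ x i * ψ x i) (volume.restrict Ω) := fun i =>
    integrable_restrict_of_continuous hb ((continuous_grad hφ i).mul (hψc i))
  simp only [Finset.mul_sum]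
  rw [integral_finsetSum _ fun i _ => i1 i, integral_finsetSum _ fun i _ => i2 i, ← Finset.sum_neg_distrib]
  refine Finset.sum_congr rfl fun i _ => ?_
  rw [setIntegral_eq_integral_of_forall_compl_eq_zero fun x hx => ?_,
    setIntegral_eq_integral_of_forall_compl_eq_zero fun x hx => ?_]
  · simp only [jac_apply hψ]
    exact ibp (hφ.of_le (by simp)) ((contDiff_pi.1 hψ i).of_le (by simp)) hφs _
  · rw [image_eq_zero_of_notMem_tsupport fun h => hx (hsub h)]; simp
  · rw [image_eq_zero_of_notMem_tsupport fun h => hx (hφsub h), zero_mul]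

/-! ### Integrability of the operator and conclusion -/

lemma memLp_top_of_continuous {d : ℕ} {Ω : Set (Fin d → ℝ)} (hΩ : MeasurableSet Ω)
    (hb : IsBounded Ω) {f : (Fin d → ℝ) → ℝ} (hf : Continuous f) :
    MemLp f ⊤ (volume.restrict Ω) := by
  obtain ⟨C, hC⟩ := hb.isCompact_closure.exists_bound_of_continuousOn hf.continuousOn
  refine memLp_top_of_bound hf.aestronglyMeasurable C ?_
  exact (ae_restrict_iff' hΩ).2 (ae_of_all _ fun x hx => hC x (subset_closure hx))

lemma integrable_Ltheta_sq {d : ℕ} {Ω : Set (Fin d → ℝ)} (hΩ : IsOpen Ω) (hb : IsBounded Ω)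
    (θ : ℝ) {A : (Fin d → ℝ) → Matrix (Fin d) (Fin d) ℝ}
    (hAmeas : ∀ i j, Measurable fun x => A x i j)
    {b : (Fin d → ℝ) → Fin d → ℝ} (hbmeas : ∀ i, Measurable fun x => b x i)
    {c : (Fin d → ℝ) → ℝ} (hcmeas : Measurable c) (hc : ∀ x, 0 ≤ c x) {KA KB KC : ℝ}
    (hAbdd : ∀ᵐ x ∂(volume.restrict Ω), Real.sqrt (frobSq (A x)) ≤ KA)
    (hbbdd : ∀ᵐ x ∂(volume.restrict Ω), Real.sqrt (vecSq (b x)) ≤ KB)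
    (hcbdd : ∀ᵐ x ∂(volume.restrict Ω), c x ≤ KC)
    {φ : (Fin d → ℝ) → ℝ} (hφ : ContDiff ℝ (⊤ : ℕ∞) φ)
    {ψ : (Fin d → ℝ) → (Fin d → ℝ)} (hψ : ContDiff ℝ (⊤ : ℕ∞) ψ) :
    Integrable (fun x => (Ltheta A b c θ φ ψ (fun y => jac ψ y) x) ^ 2)
      (volume.restrict Ω) := by
  have hψc : ∀ i, Continuous fun x => ψ x i := fun i => (continuous_apply i).comp hψ.continuous
  have hm := hΩ.measurableSet
  have : IsFiniteMeasure (volume.restrict Ω) := ⟨by simpa using hb.measure_lt_top⟩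
  have hA : ∀ i j, MemLp (fun x => A x i j) ⊤ (volume.restrict Ω) := fun i j =>
    memLp_top_of_bound (hAmeas i j).aestronglyMeasurable KA (by
      filter_upwards [hAbdd] with x hx
      exact (Real.abs_le_sqrt (entry_sq_le_frobSq (A x) i j)).trans hx)
  have hB : ∀ i, MemLp (fun x => b x i) ⊤ (volume.restrict Ω) := fun i =>
    memLp_top_of_bound (hbmeas i).aestronglyMeasurable KB (by
      filter_upwards [hbbdd] with x hx
      exact (Real.abs_le_sqrt (entry_sq_le_vecSq (b x) i)).trans hx)
  have hCc : MemLp c ⊤ (volume.restrict Ω) :=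
    memLp_top_of_bound hcmeas.aestronglyMeasurable KC (by
      filter_upwards [hcbdd] with x hx
      rwa [Real.norm_of_nonneg (hc x)])
  have hmul : ∀ {f g : (Fin d → ℝ) → ℝ}, MemLp f ⊤ (volume.restrict Ω) → Continuous g →
      MemLp (fun x => f x * g x) ⊤ (volume.restrict Ω) := fun hf hg =>
    (memLp_top_of_continuous hm hb hg).mul' hf
  have hL : MemLp (fun x => Ltheta A b c θ φ ψ (fun y => jac ψ y) x) ⊤ (volume.restrict Ω) := by
    refine ((memLp_finsetSum _ fun i _ => memLp_finsetSum _ fun j _ =>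
      hmul (hA i j) (continuous_jac hψ i j)).add (memLp_finsetSum _ fun i _ =>
      hmul (hB i) ?_)).sub (hmul hCc hφ.continuous)
    exact ((hψc i).const_mul θ).add ((continuous_grad hφ i).const_mul (1 - θ))
  exact (hL.mono_exponent le_top).integrable_sq

/-- The combination of the integrated inequalities. `E1`, `E2`, `E3` are the three terms of the
functional (`E2` including its factor `1/2`), `F`, `G`, `P`, `D` the integrals of `φ²`, `‖∇φ‖²`,
`‖ψ‖²`, `‖Dψ‖²`, and `r`, `r²` stand for the fourth and the square root of `1 - ε`. -/
lemma final_algebra {r lam q CP K E1 E2 E3 F G P D : ℝ} (hr0 : 0 < r) (hr1 : r < 1)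
    (hlam : 0 < lam) (hq : 0 ≤ q) (hCP : 0 < CP) (hK : 1 ≤ K)
    (hE1 : 0 ≤ E1) (hE2 : 0 ≤ E2) (hE3 : 0 ≤ E3) (hF : 0 ≤ F) (hG : 0 ≤ G) (hP : 0 ≤ P)
    (hD : 0 ≤ D)
    (hmain : (1 - r ^ 2) ^ 2 * (D + lam ^ 2 * F) ≤ K * E3 + (1 - r ^ 2) * E2 + lam * q * E1)
    (hGP : G ≤ 2 * E1 + 2 * P) (hPoin : CP * (P + D) ≤ D) :
    (r - r ^ 2) ^ 2 * min CP (4 * lam ^ 2)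
        / max (2 * (r - r ^ 2) ^ 2 * CP + 2 * lam * q / (1 - r ^ 2)) K * ((F + G) + (P + D))
      ≤ E1 + E2 + E3 := by
  have hs1 : 0 < 1 - r ^ 2 := by nlinarith
  have hs2 : 1 - r ^ 2 ≤ 1 := by nlinarith
  set k := (r - r ^ 2) ^ 2 with hk
  have hk0 : 0 ≤ k := sq_nonneg _
  have hk4 : 4 * k ≤ (1 - r ^ 2) ^ 2 := by
    have h1 : 2 * (r - r ^ 2) ≤ 1 - r ^ 2 := by nlinarith [sq_nonneg (1 - r)]
    have h2 : 0 ≤ 2 * (r - r ^ 2) := by nlinarith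
    have := pow_le_pow_left₀ h2 h1 2
    rw [hk]; linarith
  set m := min CP (4 * lam ^ 2) with hm
  have hm0 : 0 ≤ m := le_min hCP.le (by positivity)
  have hmC : m ≤ CP := min_le_left _ _
  have hml : m ≤ 4 * lam ^ 2 := min_le_right _ _
  set a := 2 * k * CP + 2 * lam * q / (1 - r ^ 2) with ha
  have hM : 0 < max a K := lt_of_lt_of_le (by linarith) (le_max_right _ _)
  rw [div_mul_eq_mul_div, div_le_iff₀ hM]
  have hnorm : m * ((F + G) + (P + D)) ≤ 4 * (D + lam ^ 2 * F) + 2 * CP * E1 := by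
    have h1 : m * F ≤ 4 * lam ^ 2 * F := mul_le_mul_of_nonneg_right hml hF
    have h2 : m * G ≤ CP * (2 * E1 + 2 * P) :=
      mul_le_mul hmC hGP hG hCP.le
    have h3 : m * (P + D) ≤ CP * (P + D) := mul_le_mul_of_nonneg_right hmC (by linarith)
    have h4 : 0 ≤ CP * D := by positivity
    nlinarith
  have hweights : lam * q ≤ 2 * lam * q / (1 - r ^ 2) := by
    rw [le_div_iff₀ hs1]
    have : 0 ≤ lam * q := by positivity
    nlinarith
  have hN : 0 ≤ D + lam ^ 2 * F := by positivity
  have h1 : k * (m * ((F + G) + (P + D))) ≤ k * (4 * (D + lam ^ 2 * F) + 2 * CP * E1) :=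
    mul_le_mul_of_nonneg_left hnorm hk0
  have h2 := mul_le_mul_of_nonneg_right hk4 hN
  have h3 : a * E1 ≤ max a K * E1 := mul_le_mul_of_nonneg_right (le_max_left _ _) hE1
  have h4 : (1 - r ^ 2) * E2 ≤ max a K * E2 :=
    mul_le_mul_of_nonneg_right ((hs2.trans hK).trans (le_max_right _ _)) hE2
  have h5 : K * E3 ≤ max a K * E3 := mul_le_mul_of_nonneg_right (le_max_right _ _) hE3
  have h6 : lam * q * E1 ≤ 2 * lam * q / (1 - r ^ 2) * E1 :=
    mul_le_mul_of_nonneg_right hweights hE1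
  have h7 : a * E1 = 2 * k * CP * E1 + 2 * lam * q / (1 - r ^ 2) * E1 := by rw [ha]; ring
  nlinarith

/-- **coercivity of `â_θ`, general Cordes condition, `λ > 0`.**
Under the a.e. general Cordes condition on `(A, b, c)` with parameters `λ > 0`,
`ε ∈ (0,1)`, with `Γ` an essential upper bound for
`γ := (tr A + c/λ)/(‖A‖_F² + ‖b‖²/(2λ) + (c/λ)²)` and Poincaré constant `C_P`, for all
smooth compactly supported `φ, ψ`:
`∫ ‖∇φ − ψ‖² + (1/2)∫ ‖Dψ − Dψᵀ‖_F² + ∫ (L_θ(φ,ψ,Dψ))² ≥ C·(‖φ‖²_{H¹} + ‖ψ‖²_{H¹})`,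
where, with `κ := (1−ε)^{1/4} − (1−ε)^{1/2}`,
`C = κ²·min(C_P, 4λ²)/max(2κ²C_P + 2λ(θ² + (1−θ)²)/(1 − √(1−ε)), max(1, Γ²))`. -/
theorem coercivity_a_hat_general_cordes
    {d : ℕ} (Ω : Set (Fin d → ℝ)) (hΩ : IsOpen Ω) (hbdΩ : IsBounded Ω)
    (θ : ℝ) (hθ : θ ∈ Set.Icc (0 : ℝ) 1)
    (A : (Fin d → ℝ) → Matrix (Fin d) (Fin d) ℝ)
    (hAmeas : ∀ i j, Measurable fun x => A x i j)
    (hAsymm : ∀ x, (A x).IsSymm)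
    (b : (Fin d → ℝ) → Fin d → ℝ) (hbmeas : ∀ i, Measurable fun x => b x i)
    (c : (Fin d → ℝ) → ℝ) (hcmeas : Measurable c) (hc : ∀ x, 0 ≤ c x)
    (KA KB KC : ℝ)
    (hAbdd : ∀ᵐ x ∂(volume.restrict Ω), Real.sqrt (frobSq (A x)) ≤ KA)
    (hbbdd : ∀ᵐ x ∂(volume.restrict Ω), Real.sqrt (vecSq (b x)) ≤ KB)
    (hcbdd : ∀ᵐ x ∂(volume.restrict Ω), c x ≤ KC)
    (lam ε : ℝ) (hlam : 0 < lam) (hε : ε ∈ Set.Ioo (0 : ℝ) 1)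
    (hcordes : ∀ᵐ x ∂(volume.restrict Ω),
      0 < Matrix.trace (A x) + c x / lam ∧
        (frobSq (A x) + vecSq (b x) / (2 * lam) + (c x / lam) ^ 2)
            / (Matrix.trace (A x) + c x / lam) ^ 2
          ≤ 1 / ((d : ℝ) + ε))
    (Γ : ℝ) (hΓ : ∀ᵐ x ∂(volume.restrict Ω),
      (Matrix.trace (A x) + c x / lam)
          / (frobSq (A x) + vecSq (b x) / (2 * lam) + (c x / lam) ^ 2) ≤ Γ)
    (CP : ℝ) (hCP : 0 < CP)
    (hPoincareScal : ∀ φ : (Fin d → ℝ) → ℝ, ContDiff ℝ (⊤ : ℕ∞) φ →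
      HasCompactSupport φ → tsupport φ ⊆ Ω →
      (∫ x in Ω, vecSq (grad' φ x))
        ≥ CP * ((∫ x in Ω, (φ x) ^ 2) + ∫ x in Ω, vecSq (grad' φ x)))
    (hPoincareVec : ∀ ψ : (Fin d → ℝ) → (Fin d → ℝ), ContDiff ℝ (⊤ : ℕ∞) ψ →
      HasCompactSupport ψ → tsupport ψ ⊆ Ω →
      (∫ x in Ω, frobSq (jac ψ x))
        ≥ CP * ((∫ x in Ω, vecSq (ψ x)) + ∫ x in Ω, frobSq (jac ψ x)))
    (φ : (Fin d → ℝ) → ℝ) (hφ : ContDiff ℝ (⊤ : ℕ∞) φ)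
    (hφsupp : HasCompactSupport φ) (hφsub : tsupport φ ⊆ Ω)
    (ψ : (Fin d → ℝ) → (Fin d → ℝ)) (hψ : ContDiff ℝ (⊤ : ℕ∞) ψ)
    (hψsupp : HasCompactSupport ψ) (hψsub : tsupport ψ ⊆ Ω) :
    (∫ x in Ω, vecSq fun i => grad' φ x i - ψ x i)
        + (1 / 2 : ℝ) * (∫ x in Ω, frobSq (jac ψ x - (jac ψ x)ᵀ))
        + (∫ x in Ω, (Ltheta A b c θ φ ψ (fun y => jac ψ y) x) ^ 2)
      ≥ ((Real.sqrt (Real.sqrt (1 - ε)) - Real.sqrt (1 - ε)) ^ 2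
            * min CP (4 * lam ^ 2)
          / max
              (2 * (Real.sqrt (Real.sqrt (1 - ε)) - Real.sqrt (1 - ε)) ^ 2 * CP
                + 2 * lam * (θ ^ 2 + (1 - θ) ^ 2) / (1 - Real.sqrt (1 - ε)))
              (max 1 (Γ ^ 2)))
        * (((∫ x in Ω, (φ x) ^ 2) + ∫ x in Ω, vecSq (grad' φ x))
            + ((∫ x in Ω, vecSq (ψ x)) + ∫ x in Ω, frobSq (jac ψ x))) := by
  obtain ⟨hθ0, hθ1⟩ := hθ
  obtain ⟨hε0, hε1⟩ := hε
  set s := Real.sqrt (1 - ε) with hs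
  have hs2 : s ^ 2 = 1 - ε := Real.sq_sqrt (by linarith)
  have hs0 : 0 < s := Real.sqrt_pos.2 (by linarith)
  have hs1 : s < 1 := by nlinarith
  set r := Real.sqrt s with hr
  have hrs : r ^ 2 = s := Real.sq_sqrt hs0.le
  have hr0 : 0 < r := Real.sqrt_pos.2 hs0
  have hr1 : r < 1 := by nlinarith
  have hψc : ∀ i, Continuous fun x => ψ x i := fun i => (continuous_apply i).comp hψ.continuous
  have hgc := continuous_grad hφ
  have hJ := continuous_jac hψ
  have hφc := hφ.continuous
  have cF : Continuous fun x => (φ x) ^ 2 := hφc.pow 2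
  have cG : Continuous fun x => vecSq (grad' φ x) :=
    continuous_finsetSum _ fun i _ => (hgc i).pow 2
  have cP : Continuous fun x => vecSq (ψ x) := continuous_finsetSum _ fun i _ => (hψc i).pow 2
  have cE : Continuous fun x => vecSq fun i => grad' φ x i - ψ x i :=
    continuous_finsetSum _ fun i _ => ((hgc i).sub (hψc i)).pow 2
  have cW : Continuous fun x => vecSq fun i => θ * ψ x i + (1 - θ) * grad' φ x i :=
    continuous_finsetSum _ fun i _ =>
      (((hψc i).const_mul θ).add ((hgc i).const_mul (1 - θ))).pow 2
  have cI : Continuous fun x => ∑ i, grad' φ x i * ψ x i :=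
    continuous_finsetSum _ fun i _ => (hgc i).mul (hψc i)
  have cD : Continuous fun x => frobSq (jac ψ x) := by
    unfold frobSq frobInner
    exact continuous_finsetSum _ fun i _ => continuous_finsetSum _ fun j _ => (hJ i j).mul (hJ i j)
  have cdiv : Continuous fun x => ∑ i, jac ψ x i i := continuous_finsetSum _ fun i _ => hJ i i
  have iF := integrable_restrict_of_continuous hbdΩ cF
  have iG := integrable_restrict_of_continuous hbdΩ cG
  have iP := integrable_restrict_of_continuous hbdΩ cP
  have iE := integrable_restrict_of_continuous hbdΩ cE
  have iW := integrable_restrict_of_continuous hbdΩ cW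
  have iI := integrable_restrict_of_continuous hbdΩ cI
  have iD := integrable_restrict_of_continuous hbdΩ cD
  have idiv2 : Integrable (fun x => (∑ i, jac ψ x i i) ^ 2) (volume.restrict Ω) :=
    integrable_restrict_of_continuous hbdΩ (cdiv.pow 2)
  have ifdiv : Integrable (fun x => φ x * ∑ i, jac ψ x i i) (volume.restrict Ω) :=
    integrable_restrict_of_continuous hbdΩ (hφc.mul cdiv)
  have iL := integrable_Ltheta_sq hΩ hbdΩ θ hAmeas hbmeas hcmeas hc hAbdd hbbdd hcbdd hφ hψ
  have hGP : (∫ x in Ω, vecSq (grad' φ x))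
      ≤ 2 * (∫ x in Ω, vecSq fun i => grad' φ x i - ψ x i) + 2 * ∫ x in Ω, vecSq (ψ x) := by
    rw [← integral_const_mul, ← integral_const_mul,
      ← integral_add (iE.const_mul 2) (iP.const_mul 2)]
    refine integral_mono iG ((iE.const_mul 2).add (iP.const_mul 2)) fun x => ?_
    simp only [vecSq, Finset.mul_sum, ← Finset.sum_add_distrib]
    exact Finset.sum_le_sum fun i _ => by nlinarith [sq_nonneg (grad' φ x i - 2 * ψ x i)]
  have hdot : (1 - s) * (2 * s * ∫ x in Ω, vecSq fun i => θ * ψ x i + (1 - θ) * grad' φ x i)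
      ≤ (1 - s) * (2 * ∫ x in Ω, ∑ i, grad' φ x i * ψ x i)
        + (θ ^ 2 + (1 - θ) ^ 2) * ∫ x in Ω, vecSq fun i => grad' φ x i - ψ x i := by
    have := integral_mono ((iW.const_mul (2 * s)).const_mul (1 - s))
      (((iI.const_mul 2).const_mul (1 - s)).add (iE.const_mul (θ ^ 2 + (1 - θ) ^ 2)))
      (fun x => dot_lower (grad' φ x) (ψ x) hθ0 hθ1 hs0)
    simp only [Pi.add_apply] at this
    rw [integral_add ((iI.const_mul 2).const_mul (1 - s))
      (iE.const_mul (θ ^ 2 + (1 - θ) ^ 2))] at this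
    simpa only [integral_const_mul] using this
  have hcor : (1 - s) * ((∫ x in Ω, (∑ i, jac ψ x i i) ^ 2)
        - 2 * lam * (∫ x in Ω, φ x * ∑ i, jac ψ x i i)
        + ((1 - s) * lam ^ 2 * (∫ x in Ω, (φ x) ^ 2)
        - (s * (∫ x in Ω, frobSq (jac ψ x))
        + 2 * s * lam * ∫ x in Ω, vecSq fun i => θ * ψ x i + (1 - θ) * grad' φ x i)))
      ≤ max 1 (Γ ^ 2) * ∫ x in Ω, (Ltheta A b c θ φ ψ (fun y => jac ψ y) x) ^ 2 := by
    have j1 := idiv2.sub (ifdiv.const_mul (2 * lam))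
    have j2 := (iD.const_mul s).add (iW.const_mul (2 * s * lam))
    have j3 := (iF.const_mul ((1 - s) * lam ^ 2)).sub j2
    have h := integral_mono_ae ((j1.add j3).const_mul (1 - s))
      (iL.const_mul (max 1 (Γ ^ 2))) (by
        filter_upwards [hcordes, hΓ] with x hx hΓx
        have := cordes_pointwise (A x) (jac ψ x) (b x)
          (fun i => θ * ψ x i + (1 - θ) * grad' φ x i) (c x) (φ x) lam ε s Γ hlam hε0 hs0 hs1
          hs2 hx.1 hx.2 hΓx
        refine le_trans (le_of_eq ?_) this
        simp only [Pi.add_apply, Pi.sub_apply]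
        ring)
    rw [integral_const_mul, integral_const_mul, integral_add' j1 j3,
      integral_sub' idiv2 (ifdiv.const_mul (2 * lam)),
      integral_sub' (iF.const_mul ((1 - s) * lam ^ 2)) j2,
      integral_add' (iD.const_mul s) (iW.const_mul (2 * s * lam))] at h
    simpa only [integral_const_mul] using h
  rw [integral_div_sq hbdΩ hψ hψsupp hψsub,
    integral_mul_div hbdΩ hφ hφsupp hφsub hψ hψsub] at hcor
  have hPoin := hPoincareVec ψ hψ hψsupp hψsub
  have hE1 : 0 ≤ ∫ x in Ω, vecSq fun i => grad' φ x i - ψ x i :=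
    integral_nonneg fun x => vecSq_nonneg _
  have hE2 : 0 ≤ (1 / 2 : ℝ) * ∫ x in Ω, frobSq (jac ψ x - (jac ψ x)ᵀ) :=
    mul_nonneg (by norm_num) (integral_nonneg fun x => frobSq_nonneg _)
  have hE3 : 0 ≤ ∫ x in Ω, (Ltheta A b c θ φ ψ (fun y => jac ψ y) x) ^ 2 :=
    integral_nonneg fun x => sq_nonneg _
  have hF : 0 ≤ ∫ x in Ω, (φ x) ^ 2 := integral_nonneg fun x => sq_nonneg _
  have hG : 0 ≤ ∫ x in Ω, vecSq (grad' φ x) := integral_nonneg fun x => vecSq_nonneg _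
  have hP : 0 ≤ ∫ x in Ω, vecSq (ψ x) := integral_nonneg fun x => vecSq_nonneg _
  have hD : 0 ≤ ∫ x in Ω, frobSq (jac ψ x) := integral_nonneg fun x => frobSq_nonneg _
  rw [ge_iff_le, ← hrs]
  refine final_algebra hr0 hr1 hlam (by positivity) hCP (le_max_left _ _) hE1 hE2 hE3 hF hG hP hD
    ?_ hGP hPoin
  rw [hrs]
  have := mul_le_mul_of_nonneg_left hdot hlam.le
  linear_combination hcor + this
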